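/- Let (k,′) be a differential field of characteristic zero, α, β ∈ kˣ, Q = (α,β)_k, and d a derivation on Q restricting to ′ on k. If (L,′) is a differential field extension of (k,′) that splits (Q,d), then the derivation d* = d⊗id_L + id_Q⊗′ on Q⊗_k L is a standard derivation: there exist trace-zero elements w₁, w₂ ∈ Q⊗_k L with w₁², w₂² ∈ Lˣ, w₂w₁ = −w₁w₂, d*(w₁) ∈ L·w₁ and d*(w₂) ∈ L·w₂. -/

import Mathlib

open scoped TensorProduct

/-- A derivation on a (possibly noncommutative) ring: an additive map satisfying the
Leibniz rule. -/
structure IsRingDeriv {A : Type*} [Ring A] (d : A → A) : Prop where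
  map_add : ∀ x y, d (x + y) = d x + d y
  leibniz : ∀ x y, d (x * y) = d x * y + x * d y

/-- The derivation `d` on the `k`-algebra `A` restricts to the derivation `δ` on `k`
(along `algebraMap k A`). -/
def RestrictsTo {k A : Type*} [CommRing k] [Ring A] [Algebra k A]
    (δ : k → k) (d : A → A) : Prop :=
  ∀ c : k, d (algebraMap k A c) = algebraMap k A (δ c)

/-! In a quaternion algebra every commutator is a pure quaternion, and every trace-zero `2 × 2`
matrix is a sum of two commutators, so a splitting `φ : A ≃ M₂(L)` pulls trace-zero matrices back
to pure quaternions. Since `φ` turns the derivation into the entrywise one, the preimages of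
`diag(1, -1)` and of the coordinate swap, whose entries are all constants, are constant
anticommuting square roots of `1`. -/

namespace IsRingDeriv

variable {A : Type*} [Ring A] {d : A → A}

theorem map_zero (hd : IsRingDeriv d) : d 0 = 0 := by
  simpa using hd.map_add 0 0

theorem map_one (hd : IsRingDeriv d) : d 1 = 0 := by
  simpa using hd.leibniz 1 1

theorem map_neg (hd : IsRingDeriv d) (x : A) : d (-x) = -d x := by
  rw [eq_neg_iff_add_eq_zero, ← hd.map_add, neg_add_cancel, hd.map_zero]

end IsRingDeriv

section PureQuaternions

open scoped Quaternion

variable {R A : Type*} [CommRing R] [Ring A] [Algebra R A] {a b : R}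

theorem re_lie_quaternion (x y : ℍ[R,a,b]) : ⁅x, y⁆.re = 0 := by
  simp only [Ring.lie_def, QuaternionAlgebra.re_sub, QuaternionAlgebra.re_mul]
  ring

theorem liftHom_mem_span_of_re_eq_zero (q : QuaternionAlgebra.Basis A a 0 b) {x : ℍ[R,a,b]}
    (hx : x.re = 0) : q.liftHom x ∈ Submodule.span R {q.i, q.j, q.k} :=
  Submodule.mem_span_triple.mpr
    ⟨x.imI, x.imJ, x.imK, by simp [QuaternionAlgebra.Basis.lift, hx]⟩

theorem lie_mem_span_of_anticommute {u v : A} (hu : u * u = algebraMap R A a)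
    (hv : v * v = algebraMap R A b) (hvu : v * u = -(u * v))
    (hgen : Algebra.adjoin R {u, v} = ⊤) (x y : A) :
    ⁅x, y⁆ ∈ Submodule.span R {u, v, u * v} := by
  let q : QuaternionAlgebra.Basis A a 0 b :=
    { i := u
      j := v
      k := u * v
      i_mul_i := by rw [hu, Algebra.algebraMap_eq_smul_one, zero_smul, add_zero]
      j_mul_j := by rw [hv, Algebra.algebraMap_eq_smul_one]
      i_mul_j := rfl
      j_mul_i := by rw [hvu, zero_smul, zero_sub] }
  have hq : Function.Surjective q.liftHom := by
    rw [← AlgHom.range_eq_top, q.range_liftHom, eq_top_iff, ← hgen]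
    exact Algebra.adjoin_mono (by grind)
  obtain ⟨x, rfl⟩ := hq x
  obtain ⟨y, rfl⟩ := hq y
  rw [Ring.lie_def, ← map_mul, ← map_mul, ← map_sub, ← Ring.lie_def]
  exact liftHom_mem_span_of_re_eq_zero q (re_lie_quaternion x y)

end PureQuaternions

section Matrices

variable {R A : Type*} [CommRing R] [Ring A] [Algebra R A]

theorem eq_lie_add_lie_of_trace_eq_zero {M : Matrix (Fin 2) (Fin 2) R} (hM : M.trace = 0) :
    M = ⁅(!![0, 1; 0, 0] : Matrix (Fin 2) (Fin 2) R), !![0, 0; M 0 0, 0]⁆ +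
      ⁅(!![1, 0; 0, 0] : Matrix (Fin 2) (Fin 2) R), !![0, M 0 1; -M 1 0, 0]⁆ := by
  have hM' : M 1 1 = -M 0 0 := by
    rw [eq_neg_iff_add_eq_zero, add_comm, ← Matrix.trace_fin_two, hM]
  ext i j
  fin_cases i <;> fin_cases j <;> simp [Ring.lie_def, hM']

theorem symm_mem_of_lie_mem_of_trace_eq_zero (φ : A ≃ₐ[R] Matrix (Fin 2) (Fin 2) R)
    {S : Submodule R A} (hS : ∀ x y : A, ⁅x, y⁆ ∈ S) {M : Matrix (Fin 2) (Fin 2) R}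
    (hM : M.trace = 0) : φ.symm M ∈ S := by
  have symm_lie_mem (X Y : Matrix (Fin 2) (Fin 2) R) : φ.symm ⁅X, Y⁆ ∈ S := by
    simpa only [Ring.lie_def, map_sub, map_mul] using hS (φ.symm X) (φ.symm Y)
  rw [eq_lie_add_lie_of_trace_eq_zero hM, map_add]
  exact add_mem (symm_lie_mem _ _) (symm_lie_mem _ _)

theorem apply_symm_eq_zero_of_map_eq_zero {n : Type*} [Fintype n] [DecidableEq n] {δ : R → R}
    {D : A → A} (φ : A ≃ₐ[R] Matrix n n R) (hφ : ∀ z, φ (D z) = (φ z).map δ)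
    {M : Matrix n n R} (hM : M.map δ = 0) : D (φ.symm M) = 0 :=
  φ.injective <| by rw [hφ, AlgEquiv.apply_symm_apply, hM, map_zero]

end Matrices

section BaseChange

variable {k Q : Type*} [CommRing k] [Ring Q] [Algebra k Q]

theorem adjoin_pair_eq_top_of_span_eq_top {u v : Q}
    (h : Submodule.span k (Set.range ![1, u, v, u * v]) = ⊤) : Algebra.adjoin k {u, v} = ⊤ := by
  have hu : u ∈ Algebra.adjoin k {u, v} := Algebra.subset_adjoin (by simp)
  have hv : v ∈ Algebra.adjoin k {u, v} := Algebra.subset_adjoin (by simp)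
  rw [← Algebra.toSubmodule_eq_top, eq_top_iff, ← h, Submodule.span_le]
  rintro _ ⟨i, rfl⟩
  fin_cases i
  exacts [Subalgebra.one_mem _, hu, hv, Subalgebra.mul_mem _ hu hv]

variable (L : Type*) [CommRing L] [Algebra k L]

theorem one_tmul_mul_self {x : Q} {c : k} (hx : x * x = algebraMap k Q c) :
    ((1 : L) ⊗ₜ[k] x) * (1 ⊗ₜ x) = algebraMap L (L ⊗[k] Q) (algebraMap k L c) := by
  rw [Algebra.TensorProduct.tmul_mul_tmul, hx, one_mul, ← Algebra.TensorProduct.includeRight_apply,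
    AlgHom.commutes, ← IsScalarTower.algebraMap_apply]

theorem one_tmul_anticommute {x y : Q} (hxy : y * x = -(x * y)) :
    (1 : L) ⊗ₜ[k] y * 1 ⊗ₜ x = -(1 ⊗ₜ x * 1 ⊗ₜ y) := by
  simp only [Algebra.TensorProduct.tmul_mul_tmul, hxy, one_mul, TensorProduct.tmul_neg]

theorem adjoin_one_tmul_pair_eq_top {x y : Q} (h : Algebra.adjoin k {x, y} = ⊤) :
    Algebra.adjoin L {(1 : L) ⊗ₜ[k] x, 1 ⊗ₜ y} = ⊤ := by
  simpa only [Set.image_pair] using Algebra.TensorProduct.adjoin_one_tmul_image_eq_top _ h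

end BaseChange

theorem stmt_18_general {R A : Type*} [CommRing R] [Ring A] [Algebra R A] {a b : R} {u v : A}
    (hu : u * u = algebraMap R A a) (hv : v * v = algebraMap R A b) (hvu : v * u = -(u * v))
    (hgen : Algebra.adjoin R {u, v} = ⊤) {δ : R → R} (hδ : IsRingDeriv δ) {D : A → A}
    (φ : A ≃ₐ[R] Matrix (Fin 2) (Fin 2) R) (hφ : ∀ z, φ (D z) = (φ z).map δ) :
    ∃ w₁ w₂ : A, w₁ ∈ Submodule.span R {u, v, u * v} ∧ w₂ ∈ Submodule.span R {u, v, u * v} ∧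
      w₁ * w₁ = 1 ∧ w₂ * w₂ = 1 ∧ w₂ * w₁ = -(w₁ * w₂) ∧ D w₁ = 0 ∧ D w₂ = 0 := by
  have hpure {M : Matrix (Fin 2) (Fin 2) R} (hM : M.trace = 0) :=
    symm_mem_of_lie_mem_of_trace_eq_zero φ (lie_mem_span_of_anticommute hu hv hvu hgen) hM
  refine ⟨φ.symm !![1, 0; 0, -1], φ.symm !![0, 1; 1, 0], hpure ?_, hpure ?_, ?_, ?_, ?_,
    apply_symm_eq_zero_of_map_eq_zero φ hφ ?_, apply_symm_eq_zero_of_map_eq_zero φ hφ ?_⟩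
  · simp [Matrix.trace_fin_two]
  · simp [Matrix.trace_fin_two]
  · simp [← map_mul, ← Matrix.one_fin_two]
  · simp [← map_mul, ← Matrix.one_fin_two]
  · simp [← map_mul, ← map_neg]
  · ext i j
    fin_cases i <;> fin_cases j <;> simp [hδ.map_zero, hδ.map_one, hδ.map_neg]
  · ext i j
    fin_cases i <;> fin_cases j <;> simp [hδ.map_zero, hδ.map_one]

/-- If a differential field extension `(L, ′)` splits the differential
quaternion algebra `(Q, d)`, then the induced derivation `d*` on `Q ⊗_k L` is standard:
there are trace-zero `w₁, w₂` with `w₁², w₂² ∈ Lˣ`, `w₂w₁ = −w₁w₂`, `d*(w₁) ∈ L·w₁`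
and `d*(w₂) ∈ L·w₂`. -/
theorem stmt_18 (k : Type*) [Field k] [CharZero k]
    (δk : k → k) (hδk : IsRingDeriv δk)
    (α β : k) (hα : α ≠ 0) (hβ : β ≠ 0)
    (Q : Type*) [Ring Q] [Algebra k Q]
    (u v : Q) (hu : u * u = algebraMap k Q α) (hv : v * v = algebraMap k Q β)
    (huv : v * u = -(u * v))
    (bQ : Module.Basis (Fin 4) k Q) (hbQ : ⇑bQ = ![1, u, v, u * v])
    (d : Q → Q) (hd : IsRingDeriv d) (hdk : RestrictsTo δk d)
    (L : Type*) [Field L] [Algebra k L]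
    (δL : L → L) (hδL : IsRingDeriv δL) (hresL : RestrictsTo δk δL)
    (D : L ⊗[k] Q → L ⊗[k] Q) (hD : IsRingDeriv D)
    (hDt : ∀ (y : L) (x : Q), D (y ⊗ₜ[k] x) = δL y ⊗ₜ[k] x + y ⊗ₜ[k] d x)
    (hsplit : ∃ φ : (L ⊗[k] Q) ≃ₐ[L] Matrix (Fin 2) (Fin 2) L,
      ∀ z, φ (D z) = (φ z).map δL) :
    ∃ w₁ w₂ : L ⊗[k] Q,
      w₁ ∈ Submodule.span L
        ({(1 : L) ⊗ₜ[k] u, (1 : L) ⊗ₜ[k] v, (1 : L) ⊗ₜ[k] (u * v)} : Set (L ⊗[k] Q)) ∧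
      w₂ ∈ Submodule.span L
        ({(1 : L) ⊗ₜ[k] u, (1 : L) ⊗ₜ[k] v, (1 : L) ⊗ₜ[k] (u * v)} : Set (L ⊗[k] Q)) ∧
      (∃ c : L, c ≠ 0 ∧ w₁ * w₁ = algebraMap L (L ⊗[k] Q) c) ∧
      (∃ c : L, c ≠ 0 ∧ w₂ * w₂ = algebraMap L (L ⊗[k] Q) c) ∧
      w₂ * w₁ = -(w₁ * w₂) ∧
      (∃ c : L, D w₁ = c • w₁) ∧
      (∃ c : L, D w₂ = c • w₂) := by
  obtain ⟨φ, hφ⟩ := hsplit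
  have hgen : Algebra.adjoin k {u, v} = ⊤ :=
    adjoin_pair_eq_top_of_span_eq_top (hbQ ▸ bQ.span_eq)
  obtain ⟨w₁, w₂, hw₁, hw₂, hsq₁, hsq₂, hanti, hD₁, hD₂⟩ :=
    stmt_18_general (one_tmul_mul_self L hu) (one_tmul_mul_self L hv)
      (one_tmul_anticommute L huv) (adjoin_one_tmul_pair_eq_top L hgen) hδL φ hφ
  rw [Algebra.TensorProduct.tmul_mul_tmul, one_mul] at hw₁ hw₂
  exact ⟨w₁, w₂, hw₁, hw₂, ⟨1, one_ne_zero, by rw [hsq₁, map_one]⟩,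
    ⟨1, one_ne_zero, by rw [hsq₂, map_one]⟩, hanti, ⟨0, by rw [hD₁, zero_smul]⟩,
    ⟨0, by rw [hD₂, zero_smul]⟩⟩
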